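/- For every ideal I of R = ℂ[x₁,…,xₙ] and every integer d ≥ 1, the local Hilbert function of I at the origin is computed by successive truncated dual spaces: H_{IR₀}(d) := dim_ℂ R₀/(IR₀ + m^{d+1}) − dim_ℂ R₀/(IR₀ + m^d) = dim_ℂ D₀^d[I] − dim_ℂ D₀^{d−1}[I]. -/

import Mathlib

open MvPolynomial

noncomputable section

/-- The polynomial ring `R = ℂ[x₁,…,xₙ]`. -/
abbrev Rn (n : ℕ) := MvPolynomial (Fin n) ℂ

/-- Total degree of a monomial exponent vector. -/
def mdeg {n : ℕ} (m : Fin n →₀ ℕ) : ℕ := m.sum fun _ e => e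

/-- The truncated dual space `D₀^d`: linear functionals on `R` vanishing on all
monomials of degree greater than `d` (identified with `(R_d)*`). -/
def DualTrunc (n d : ℕ) : Submodule ℂ (Module.Dual ℂ (Rn n)) where
  carrier := {p | ∀ m : Fin n →₀ ℕ, d < mdeg m → p (monomial m 1) = 0}
  add_mem' := by
    intro p q hp hq m hm
    simp [hp m hm, hq m hm]
  zero_mem' := by
    intro m hm
    simp
  smul_mem' := by
    intro c p hp m hm
    simp [hp m hm]

/-- The Macaulay dual space `D₀` at the origin: linear functionals on `R` vanishing
on all monomials of sufficiently large degree, i.e. `⋃ d, D₀^d`. -/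
def MacaulayDual (n : ℕ) : Submodule ℂ (Module.Dual ℂ (Rn n)) where
  carrier := {p | ∃ d : ℕ, ∀ m : Fin n →₀ ℕ, d < mdeg m → p (monomial m 1) = 0}
  add_mem' := by
    rintro p q ⟨d₁, hp⟩ ⟨d₂, hq⟩
    refine ⟨max d₁ d₂, fun m hm => ?_⟩
    simp [hp m (lt_of_le_of_lt (le_max_left _ _) hm),
          hq m (lt_of_le_of_lt (le_max_right _ _) hm)]
  zero_mem' := ⟨0, fun m _ => rfl⟩
  smul_mem' := by
    rintro c p ⟨d, hp⟩
    exact ⟨d, fun m hm => by simp [hp m hm]⟩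

/-- The space of linear functionals annihilating an ideal `I`. -/
def annIdeal {n : ℕ} (I : Ideal (Rn n)) : Submodule ℂ (Module.Dual ℂ (Rn n)) where
  carrier := {p | ∀ f ∈ I, p f = 0}
  add_mem' := by
    intro p q hp hq f hf
    simp [hp f hf, hq f hf]
  zero_mem' := by intro f _; rfl
  smul_mem' := by
    intro c p hp f hf
    simp [hp f hf]

/-- The Macaulay dual space `D₀[I] = {p ∈ D₀ : p(f) = 0 for all f ∈ I}`. -/
def dualOf {n : ℕ} (I : Ideal (Rn n)) : Submodule ℂ (Module.Dual ℂ (Rn n)) :=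
  MacaulayDual n ⊓ annIdeal I

/-- The truncated dual space `D₀^d[I] = D₀[I] ∩ D₀^d`. -/
def truncDualOf {n : ℕ} (I : Ideal (Rn n)) (d : ℕ) : Submodule ℂ (Module.Dual ℂ (Rn n)) :=
  DualTrunc n d ⊓ annIdeal I

/-- The contraction `IR₀ ∩ R` of the extension of `I` to the localization at the
origin: `{g ∈ R : ∃ h ∈ R with h(0) ≠ 0 and h·g ∈ I}`. -/
def contraction {n : ℕ} (I : Ideal (Rn n)) : Set (Rn n) :=
  {g | ∃ h : Rn n, eval (0 : Fin n → ℂ) h ≠ 0 ∧ h * g ∈ I}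

/-- The maximal ideal `m = ⟨x₁,…,xₙ⟩` at the origin, as the kernel of evaluation at `0`. -/
def mIdeal (n : ℕ) : Ideal (Rn n) := RingHom.ker (eval (0 : Fin n → ℂ))

instance (n : ℕ) : (mIdeal n).IsPrime := RingHom.ker_isPrime _

/-- The localization `R₀` of `R` at the maximal ideal of the origin. -/
abbrev Loc (n : ℕ) := Localization.AtPrime (mIdeal n)

/-- The extension `JR₀` of an ideal `J ⊆ R` to the localization `R₀`. -/
def extIdeal {n : ℕ} (J : Ideal (Rn n)) : Ideal (Loc n) :=
  J.map (algebraMap (Rn n) (Loc n))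

/-- Differentiation `σ_f : D₀ → D₀` by `f ∈ R`, `(σ_f p)(g) = p (f * g)`. -/
def sigma {n : ℕ} (f : Rn n) : Module.Dual ℂ (Rn n) →ₗ[ℂ] Module.Dual ℂ (Rn n) :=
  (LinearMap.mulLeft ℂ f).dualMap

/-- A graded monomial order on exponent vectors in `ℕⁿ`: a strict total order
compatible with addition and refining total degree. -/
structure IsGradedMonomialOrder {n : ℕ} (lt : (Fin n →₀ ℕ) → (Fin n →₀ ℕ) → Prop) : Prop where
  irrefl : ∀ a, ¬ lt a a
  trans : ∀ a b c, lt a b → lt b c → lt a c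
  total : ∀ a b, a ≠ b → lt a b ∨ lt b a
  add_compat : ∀ a b c, lt a b → lt (a + c) (b + c)
  deg_compat : ∀ a b, mdeg a < mdeg b → lt a b

/-- `β` is the lead monomial of `g` for the graded local order associated to `lt`:
the `lt`-minimal monomial of `g` with nonzero coefficient. -/
def IsLeadMonomial {n : ℕ} (lt : (Fin n →₀ ℕ) → (Fin n →₀ ℕ) → Prop)
    (g : Rn n) (β : Fin n →₀ ℕ) : Prop :=
  coeff β g ≠ 0 ∧ ∀ γ : Fin n →₀ ℕ, coeff γ g ≠ 0 → γ ≠ β → lt β γ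

/-- The initial ideal `in_≥(IR₀) ∩ R`: the monomial ideal of `R` generated by the
lead monomials of nonzero elements of the contraction `IR₀ ∩ R`. -/
def initialIdeal {n : ℕ} (lt : (Fin n →₀ ℕ) → (Fin n →₀ ℕ) → Prop)
    (I : Ideal (Rn n)) : Ideal (Rn n) :=
  Ideal.span {q | ∃ g ∈ contraction I, g ≠ 0 ∧
    ∃ β : Fin n →₀ ℕ, IsLeadMonomial lt g β ∧ q = monomial β 1}

/-- `∂^α` is (up to the scalar `p(x^α)`) the initial term of the dual functional `p`:
`α` is the `lt`-maximal monomial with nonzero coefficient in `p`. -/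
def IsInitialOf {n : ℕ} (lt : (Fin n →₀ ℕ) → (Fin n →₀ ℕ) → Prop)
    (p : Module.Dual ℂ (Rn n)) (α : Fin n →₀ ℕ) : Prop :=
  p (monomial α 1) ≠ 0 ∧ ∀ β : Fin n →₀ ℕ, p (monomial β 1) ≠ 0 → β ≠ α → lt β α

/-!
An ideal `J ⊇ m ^ (d + 1)` turns every polynomial outside `m` into a unit of `R ⧸ J`, so localizing
at the origin does not change that quotient: `R ⧸ J ≃ R₀ ⧸ JR₀`. On the other hand `m ^ (d + 1)` is
spanned by the monomials of degree greater than `d`, so `D₀^d[I]` is exactly the annihilator of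
`J = I + m ^ (d + 1)`, that is, the dual of `R ⧸ J`. Hence `dim R₀ ⧸ (IR₀ + m ^ (d + 1))` and
`dim D₀^d[I]` agree for every `d`.
-/

section Localization

variable {R : Type*} [CommRing R]

theorem isUnit_quotientMk_of_pow_le {p J : Ideal R} [p.IsMaximal] {k : ℕ} (hJ : p ^ k ≤ J)
    {x : R} (hx : x ∉ p) : IsUnit (Ideal.Quotient.mk J x) :=
  (Ideal.Quotient.isUnit_mk_pow_of_notMem p hx).map (Ideal.Quotient.factor hJ)

variable {M : Submonoid R} (S : Type*) [CommRing S] [Algebra R S] [IsLocalization M S]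

/-- The canonical isomorphism `R ⧸ J ≃ S ⧸ JS` for a localization `S` of `R` at a submonoid whose
elements are units modulo `J`; it carries dimension counts on `S ⧸ JS` back to `R`. -/
def quotientEquivQuotientMap {J : Ideal R} (hJ : ∀ s ∈ M, IsUnit (Ideal.Quotient.mk J s)) :
    (R ⧸ J) ≃ₐ[R] S ⧸ J.map (algebraMap R S) :=
  have units_le : Algebra.algebraMapSubmonoid (R ⧸ J) M ≤ IsUnit.submonoid (R ⧸ J) := by
    rintro _ ⟨s, hs, rfl⟩
    exact hJ s hs
  (IsLocalization.atUnits (R ⧸ J) _ units_le).restrictScalars R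

theorem finrank_quotient_map_algebraMap (K : Type*) [CommSemiring K] [Algebra K R]
    [Algebra K S] [IsScalarTower K R S] {J : Ideal R}
    (hJ : ∀ s ∈ M, IsUnit (Ideal.Quotient.mk J s)) :
    Module.finrank K (S ⧸ J.map (algebraMap R S)) = Module.finrank K (R ⧸ J) :=
  ((quotientEquivQuotientMap S hJ).toLinearEquiv.restrictScalars K).finrank_eq.symm

end Localization

section IdealOfVars

variable (σ K : Type*) [CommSemiring K]

theorem ker_constantCoeff_eq_idealOfVars :
    RingHom.ker (constantCoeff : MvPolynomial σ K →+* K) = idealOfVars σ K := by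
  ext f
  rw [RingHom.mem_ker, constantCoeff_eq, ← pow_one (idealOfVars σ K), mem_pow_idealOfVars_iff']
  simp only [Nat.lt_one_iff, Finsupp.degree_eq_zero_iff, forall_eq]

theorem restrictScalars_pow_idealOfVars_eq_span (k : ℕ) :
    (idealOfVars σ K ^ k).restrictScalars K =
      Submodule.span K ((monomial · 1) '' {m | k ≤ m.degree}) := by
  rw [← restrictSupport_eq_span]
  ext f
  exact mem_pow_idealOfVars_iff k f

end IdealOfVars

theorem finrank_dualAnnihilator {K V : Type*} [Field K] [AddCommGroup V] [Module K V]
    (W : Submodule K V) : Module.finrank K W.dualAnnihilator = Module.finrank K (V ⧸ W) := by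
  rw [← W.dualQuotEquivDualAnnihilator.finrank_eq, Subspace.dual_finrank_eq]

section MacaulayDual

variable {n : ℕ}

instance mIdeal_isMaximal : (mIdeal n).IsMaximal :=
  RingHom.ker_isMaximal_of_surjective _ fun c => ⟨C c, eval_C c⟩

theorem mIdeal_eq_idealOfVars : mIdeal n = idealOfVars (Fin n) ℂ := by
  rw [mIdeal, eval_zero, ker_constantCoeff_eq_idealOfVars]

theorem dualTrunc_eq_dualAnnihilator (d : ℕ) :
    DualTrunc n d = ((mIdeal n ^ (d + 1)).restrictScalars ℂ).dualAnnihilator := by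
  rw [mIdeal_eq_idealOfVars, restrictScalars_pow_idealOfVars_eq_span]
  ext p
  rw [← SetLike.mem_coe (p := Submodule.dualAnnihilator _), Submodule.coe_dualAnnihilator_span]
  -- Unfolding definitions, `mdeg` is `Finsupp.degree` and `d < k` is `d + 1 ≤ k`.
  exact (Set.image_subset_iff (t := (LinearMap.ker p : Set (Rn n)))).symm

theorem annIdeal_eq_dualAnnihilator (I : Ideal (Rn n)) :
    annIdeal I = (I.restrictScalars ℂ).dualAnnihilator := by
  ext p
  rw [Submodule.mem_dualAnnihilator]
  rfl

theorem truncDualOf_eq_dualAnnihilator (I : Ideal (Rn n)) (d : ℕ) :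
    truncDualOf I d = ((I ⊔ mIdeal n ^ (d + 1)).restrictScalars ℂ).dualAnnihilator := by
  rw [truncDualOf, dualTrunc_eq_dualAnnihilator, annIdeal_eq_dualAnnihilator, inf_comm,
    ← Submodule.dualAnnihilator_sup_eq, Submodule.restrictScalars_sup]

theorem extIdeal_add_extIdeal_pow (I J : Ideal (Rn n)) (k : ℕ) :
    extIdeal I + extIdeal J ^ k = extIdeal (I ⊔ J ^ k) := by
  rw [extIdeal, extIdeal, extIdeal, Ideal.map_sup, Ideal.map_pow, Submodule.add_eq_sup]

theorem finrank_quotient_extIdeal {J : Ideal (Rn n)} {k : ℕ} (hJ : mIdeal n ^ k ≤ J) :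
    Module.finrank ℂ (Loc n ⧸ extIdeal J) = Module.finrank ℂ (Rn n ⧸ J) :=
  finrank_quotient_map_algebraMap (M := (mIdeal n).primeCompl) (Loc n) ℂ fun _ hs =>
    isUnit_quotientMk_of_pow_le hJ hs

theorem finrank_quotient_extIdeal_add_pow (I : Ideal (Rn n)) (d : ℕ) :
    Module.finrank ℂ (Loc n ⧸ (extIdeal I + extIdeal (mIdeal n) ^ (d + 1))) =
      Module.finrank ℂ (truncDualOf I d) := by
  rw [extIdeal_add_extIdeal_pow, finrank_quotient_extIdeal le_sup_right,
    truncDualOf_eq_dualAnnihilator, finrank_dualAnnihilator,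
    (Submodule.Quotient.restrictScalarsEquiv ℂ _).finrank_eq]

end MacaulayDual

/-- For `d ≥ 1`, the local Hilbert function
`H_{IR₀}(d) = dim R₀/(IR₀ + m^{d+1}) − dim R₀/(IR₀ + m^d)` equals
`dim D₀^d[I] − dim D₀^{d−1}[I]`. -/
theorem local_hilbert_function_via_duals (n : ℕ) (I : Ideal (Rn n)) (d : ℕ) (hd : 1 ≤ d) :
    (Module.finrank ℂ (Loc n ⧸ (extIdeal I + extIdeal (mIdeal n) ^ (d + 1))) : ℤ)
        - (Module.finrank ℂ (Loc n ⧸ (extIdeal I + extIdeal (mIdeal n) ^ d)) : ℤ)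
      = (Module.finrank ℂ (truncDualOf I d) : ℤ)
        - (Module.finrank ℂ (truncDualOf I (d - 1)) : ℤ) := by
  obtain ⟨e, rfl⟩ := Nat.exists_eq_add_of_le' hd
  rw [finrank_quotient_extIdeal_add_pow, finrank_quotient_extIdeal_add_pow, Nat.add_sub_cancel]
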